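/- arXiv:1502.07618 — 2 statements merged into one kernel-verified Lean document; each statement's English description precedes it below -/
import Mathlib

section
/- Let φ be an invertible RDS on 𝕊¹ with ℙ(Ω_c)=1, and let r̃:Ω_c→𝕊¹ denote the crack-point map. Then either (a) for every x∈𝕊¹, ℙ(ω∈Ω_c : r̃(ω)=x)=0, or (b) there exists a deterministic fixed point p∈𝕊¹ such that ℙ(ω∈Ω_c : r̃(ω)=p)=1. -/
open MeasureTheory Filter Topology Set ENNReal

noncomputable section

/-- The natural projection `π : ℝ → 𝕊¹ = ℝ/ℤ`. -/
def circleProj (x : ℝ) : UnitAddCircle := (x : UnitAddCircle)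

/-- `f` is an orientation-preserving homeomorphism of the circle: it admits a strictly
monotone degree-one lift. -/
def OrientPreserving (f : UnitAddCircle ≃ₜ UnitAddCircle) : Prop :=
  ∃ F : ℝ → ℝ, StrictMono F ∧ (∀ x : ℝ, F (x + 1) = F x + 1) ∧
    ∀ x : ℝ, f (circleProj x) = circleProj (F x)

/-- The anticlockwise distance `d₊(x,y) = min {r ≥ 0 : π(x' + r) = y}` (`x'` any lift of `x`). -/
def dPlus (x y : UnitAddCircle) : ℝ :=
  sInf {r : ℝ | 0 ≤ r ∧ ∃ x' : ℝ, circleProj x' = x ∧ circleProj (x' + r) = y}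

/-- An invertible random dynamical system on the circle, in discrete or continuous time,
driven by a stationary memoryless noise process. -/
structure RDS (Ω : Type) [m : MeasurableSpace Ω] where
  /-- the time set `𝕋⁺`: either `ℕ ∪ {0}` or `[0,∞)`, viewed inside `ℝ` -/
  T : Set ℝ
  T_cases : T = Set.range (fun n : ℕ => (n : ℝ)) ∨ T = Set.Ici (0 : ℝ)
  /-- the filtration -/
  F : ℝ → MeasurableSpace Ω
  F_le : ∀ t ∈ T, F t ≤ m
  F_mono : ∀ s ∈ T, ∀ t ∈ T, s ≤ t → F s ≤ F t
  /-- the probability measure -/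
  P : Measure Ω
  P_prob : IsProbabilityMeasure P
  /-- the time-shift maps on the noise space -/
  θ : ℝ → Ω → Ω
  θ_zero : θ 0 = id
  θ_add : ∀ s ∈ T, ∀ t ∈ T, θ (s + t) = θ t ∘ θ s
  θ_preserving : ∀ t ∈ T, MeasurePreserving (θ t) P P
  θ_adapted : ∀ s ∈ T, ∀ t ∈ T, @Measurable Ω Ω (F (s + t)) (F s) (θ t)
  θ_indep : ∀ t ∈ T, ∀ E A : Set Ω, MeasurableSet[F t] E →
    MeasurableSet[⨆ s ∈ T, F s] A → P (E ∩ θ t ⁻¹' A) = P E * P A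
  /-- the random homeomorphisms -/
  φ : ℝ → Ω → UnitAddCircle ≃ₜ UnitAddCircle
  φ_orient : ∀ t ∈ T, ∀ ω, OrientPreserving (φ t ω)
  φ_meas : ∀ t ∈ T, @Measurable (Ω × UnitAddCircle) UnitAddCircle
    ((F t).prod inferInstance) inferInstance (fun p => φ t p.1 p.2)
  φ_zero : ∀ ω, φ 0 ω = Homeomorph.refl UnitAddCircle
  φ_cocycle : ∀ s ∈ T, ∀ t ∈ T, ∀ ω x, φ (s + t) ω x = φ t (θ s ω) (φ s ω x)
  φ_cadlag_right : ∀ ω, ∀ t ∈ T, ∀ tn : ℕ → ℝ, (∀ n, tn n ∈ T) → Antitone tn →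
    Tendsto tn atTop (𝓝 t) → ∀ (xn : ℕ → UnitAddCircle) (x : UnitAddCircle),
      Tendsto xn atTop (𝓝 x) →
      Tendsto (fun n => φ (tn n) ω (xn n)) atTop (𝓝 (φ t ω x))
  /-- the left-limit maps -/
  φ_left_lim : ℝ → Ω → UnitAddCircle → UnitAddCircle
  φ_cadlag_left : ∀ ω, ∀ t ∈ T, ∀ tn : ℕ → ℝ, (∀ n, tn n ∈ T) → StrictMono tn →
    Tendsto tn atTop (𝓝 t) → ∀ (xn : ℕ → UnitAddCircle) (x : UnitAddCircle),
      Tendsto xn atTop (𝓝 x) →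
      Tendsto (fun n => φ (tn n) ω (xn n)) atTop (𝓝 (φ_left_lim t ω x))

/-- A probability measure on the circle is atomless if every singleton is null. -/
def Atomless (ρ : Measure UnitAddCircle) : Prop := ∀ x, ρ {x} = 0

/-- A measure on the circle has full support. -/
def FullSupport (ρ : Measure UnitAddCircle) : Prop :=
  ∀ U : Set UnitAddCircle, IsOpen U → U.Nonempty → 0 < ρ U

/-- The (topological) support of a measure on the circle. -/
def msupport (ρ : Measure UnitAddCircle) : Set UnitAddCircle :=
  {x | ∀ U : Set UnitAddCircle, IsOpen U → x ∈ U → 0 < ρ U}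

namespace RDS

variable {Ω : Type} [m : MeasurableSpace Ω] (S : RDS Ω)

/-- the future σ-algebra `𝓕₊ = σ(𝓕_t : t ∈ 𝕋⁺)`. -/
def Fplus : MeasurableSpace Ω := ⨆ t ∈ S.T, S.F t

/-- The filter "t → ∞ along the time set 𝕋⁺". -/
def tFilter : Filter ℝ := atTop ⊓ 𝓟 S.T

/-- two-point contractibility. -/
def Contractible : Prop := ∀ x y : UnitAddCircle, x ≠ y →
  0 < S.P {ω | ∃ t ∈ S.T, dist (S.φ t ω x) (S.φ t ω y) < dist x y}

/-- compressibility. -/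
def Compressible : Prop := ∀ x y : UnitAddCircle, x ≠ y →
  0 < S.P {ω | ∃ t ∈ S.T, dPlus (S.φ t ω x) (S.φ t ω y) < dPlus x y}

/-- `p` is a deterministic fixed point. -/
def DetFixedPoint (p : UnitAddCircle) : Prop :=
  ∀ᵐ ω ∂S.P, ∀ t ∈ S.T, S.φ t ω p = p

/-- `A` is forward-invariant. -/
def ForwardInvariant (A : Set UnitAddCircle) : Prop :=
  ∀ᵐ ω ∂S.P, ∀ t ∈ S.T, ⇑(S.φ t ω) '' A ⊆ A

/-- reverse-minimal dynamics: the only open forward-invariant sets are `∅` and `𝕊¹`. -/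
def ReverseMinimal : Prop :=
  ∀ A : Set UnitAddCircle, IsOpen A → S.ForwardInvariant A → A = ∅ ∨ A = Set.univ

/-- synchronisation. -/
def Synchronising : Prop := ∀ x y : UnitAddCircle,
  S.P {ω | Tendsto (fun t => dist (S.φ t ω x) (S.φ t ω y)) S.tFilter (𝓝 0)} = 1

/-- everywhere local stability. -/
def EverywhereLocallyStable : Prop := ∀ x : UnitAddCircle,
  S.P {ω | ∃ U : Set UnitAddCircle, IsOpen U ∧ x ∈ U ∧
    Tendsto (fun t => volume (⇑(S.φ t ω) '' U)) S.tFilter (𝓝 0)} = 1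

/-- stable synchronisation. -/
def StablySynchronising : Prop := S.Synchronising ∧ S.EverywhereLocallyStable

/-- `ρ` is reverse-stationary: `ρ(A) = ∫ ρ(φ(t,ω)A) ℙ(dω)` for all `t ∈ 𝕋⁺`, Borel `A`. -/
def ReverseStationary (ρ : Measure UnitAddCircle) : Prop :=
  ∀ t ∈ S.T, ∀ A : Set UnitAddCircle, MeasurableSet A →
    ρ A = ∫⁻ ω, ρ (⇑(S.φ t ω) '' A) ∂S.P

/-- `r` is a crack point of `ω`. -/
def CrackPoint (ω : Ω) (r : UnitAddCircle) : Prop :=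
  ∀ G : Set UnitAddCircle, IsClosed G → r ∉ G →
    Tendsto (fun t => volume (⇑(S.φ t ω) '' G)) S.tFilter (𝓝 0)

/-- the set of contractive sample points. -/
def Ωc : Set Ω := {ω | ∃ r, S.CrackPoint ω r}

/-- the reverse transition probabilities `φ̄ₓᵗ(A) = ℙ(ω : φ(t,ω)⁻¹(x) ∈ A)`. -/
def revTrans (t : ℝ) (x : UnitAddCircle) (A : Set UnitAddCircle) : ℝ≥0∞ :=
  S.P {ω | (S.φ t ω).symm x ∈ A}

/-- the forward transition probabilities `φₓᵗ(A) = ℙ(ω : φ(t,ω)x ∈ A)`. -/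
def fwdTrans (t : ℝ) (x : UnitAddCircle) (A : Set UnitAddCircle) : ℝ≥0∞ :=
  S.P {ω | S.φ t ω x ∈ A}

/-- `ρ` is stationary for a transition family `ν`. -/
def StationaryFor (ν : ℝ → UnitAddCircle → Set UnitAddCircle → ℝ≥0∞)
    (ρ : Measure UnitAddCircle) : Prop :=
  ∀ t ∈ S.T, ∀ A : Set UnitAddCircle, MeasurableSet A → ρ A = ∫⁻ x, ν t x A ∂ρ

/-- `ρ` is ergodic for a transition family `ν`. -/
def ErgodicFor (ν : ℝ → UnitAddCircle → Set UnitAddCircle → ℝ≥0∞)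
    (ρ : Measure UnitAddCircle) : Prop :=
  S.StationaryFor ν ρ ∧ ∀ A : Set UnitAddCircle, MeasurableSet A →
    (∀ t ∈ S.T, ∀ᵐ x ∂ρ, x ∈ A → ν t x A = 1) → ρ A = 0 ∨ ρ A = 1

end RDS

/-!
The events `{y is the crack point}` are pairwise disjoint, so the probability `u y` that `y` is the
crack point attains a maximum, at `p` say. Since `p` is the crack point of `ω` exactly when
`φ(t,ω)p` is the crack point of `θ^t ω`, and `θ^t ω` is independent of `𝓕_t`, the conditional
probability given `𝓕_t` that `p` is the crack point is `u (φ(t,ω)p) ≤ u p`. Both sides have mean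
`u p`, so they agree almost surely: the event `{p is the crack point}` is independent of every
`𝓕_t`, hence of itself, and `u p` is `0` or `1`. If `u p = 1`, then `p` and `φ(t,ω)p` are almost
surely both crack points of `θ^t ω`, so they coincide, and right-continuity makes this
simultaneous in `t`.

Measurability of these events in continuous time rests on the lower semicontinuity of
`t ↦ l(φ(t,ω)V)`, for `V` open, along sequences decreasing to `t`: it lets the limit `t → ∞` be
taken along a countable set of times.
-/

section Independence

open ProbabilityTheory

variable {Ω β γ : Type*} {𝓖 mΩ : MeasurableSpace Ω} {mβ : MeasurableSpace β}
  {mγ : MeasurableSpace γ} {P : Measure Ω} {X : Ω → β} {Y : Ω → γ}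

theorem measure_mk_mem_eq_lintegral_of_indepFun [IsFiniteMeasure P]
    (hX : Measurable X) (hY : Measurable Y) (hXY : IndepFun X Y P)
    {D : Set (β × γ)} (hD : MeasurableSet D) :
    P {ω | (X ω, Y ω) ∈ D} = ∫⁻ ω, P.map Y {y | (X ω, y) ∈ D} ∂P :=
  calc P {ω | (X ω, Y ω) ∈ D}
      = P.map (fun ω => (X ω, Y ω)) D := (Measure.map_apply (hX.prodMk hY) hD).symm
    _ = (P.map X).prod (P.map Y) D := by
        rw [(indepFun_iff_map_prod_eq_prod_map_map
          hX.aemeasurable hY.aemeasurable).1 hXY]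
    _ = ∫⁻ x, P.map Y {y | (x, y) ∈ D} ∂P.map X := Measure.prod_apply hD
    _ = ∫⁻ ω, P.map Y {y | (X ω, y) ∈ D} ∂P :=
        lintegral_map (measurable_measure_prodMk_left hD) hX

theorem measure_inter_mk_mem_eq_setLIntegral_of_indep [IsFiniteMeasure P]
    (h𝓖 : 𝓖 ≤ mΩ) (hX : Measurable[𝓖] X) (hY : Measurable Y)
    (hind : Indep 𝓖 (mγ.comap Y) P)
    {B : Set Ω} (hB : MeasurableSet[𝓖] B) {D : Set (β × γ)} (hD : MeasurableSet D) :
    P (B ∩ {ω | (X ω, Y ω) ∈ D}) = ∫⁻ ω in B, P.map Y {y | (X ω, y) ∈ D} ∂P := by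
  -- Carrying the indicator of `B` along with `X` reduces to the case `B = univ`.
  have hB' : Measurable[𝓖] (· ∈ B) := (@measurableSet_setOfPred _ 𝓖 _).1 hB
  have hZ : Measurable[𝓖] fun ω => (ω ∈ B, X ω) := hB'.prodMk hX
  have hD' : MeasurableSet {q : (Prop × β) × γ | q.1.1 ∧ (q.1.2, q.2) ∈ D} :=
    (measurableSet_setOfPred.2 (measurable_fst.comp measurable_fst)).inter
      (((measurable_snd.comp measurable_fst).prodMk measurable_snd) hD)
  have hZY : IndepFun (fun ω => (ω ∈ B, X ω)) Y P :=
    indep_of_indep_of_le_left hind hZ.comap_le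
  refine (measure_mk_mem_eq_lintegral_of_indepFun (hZ.mono h𝓖 le_rfl) hY hZY hD').trans ?_
  rw [← lintegral_indicator (h𝓖 B hB)]
  refine lintegral_congr fun ω => ?_
  by_cases hω : ω ∈ B <;> simp [hω]

theorem measure_eq_zero_or_one_of_indep_directed [IsZeroOrProbabilityMeasure P] {ι : Type*}
    {𝓕 : ι → MeasurableSpace Ω} (h_le : ∀ i, 𝓕 i ≤ mΩ) (h_dir : Directed (· ≤ ·) 𝓕)
    {E : Set Ω} (hE : MeasurableSet[⨆ i, 𝓕 i] E)
    (h_ind : ∀ i B, MeasurableSet[𝓕 i] B → P (B ∩ E) = P B * P E) :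
    P E = 0 ∨ P E = 1 := by
  have hEm : MeasurableSet E := iSup_le h_le E hE
  have hσE : MeasurableSpace.generateFrom {E} ≤ mΩ :=
    MeasurableSpace.generateFrom_le (by simpa using hEm)
  have h_each (i : ι) : Indep (𝓕 i) (MeasurableSpace.generateFrom {E}) P := by
    refine IndepSets.indep (h_le i) hσE
      (@MeasurableSpace.isPiSystem_measurableSet _ (𝓕 i)) (IsPiSystem.singleton E)
      (@MeasurableSpace.generateFrom_measurableSet _ (𝓕 i)).symm rfl ?_
    rw [IndepSets_iff]
    rintro B _ hB rfl
    exact h_ind i B hB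
  have h_sup := indep_iSup_of_directed_le h_each h_le hσE h_dir
  exact measure_eq_zero_or_one_of_indepSet_self
    (h_sup.indepSet_of_measurableSet hE (MeasurableSpace.measurableSet_generateFrom rfl))

end Independence

theorem exists_forall_measure_le_of_pairwise_disjoint {α ι : Type*} [MeasurableSpace α]
    (μ : Measure α) [IsFiniteMeasure μ] [Nonempty ι] {A : ι → Set α}
    (hA : ∀ i, MeasurableSet (A i)) (hd : Pairwise (Function.onFun Disjoint A)) :
    ∃ i, ∀ j, μ (A j) ≤ μ (A i) := by
  by_cases h0 : ∀ j, μ (A j) = 0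
  · exact ⟨Classical.arbitrary ι, fun j => (h0 j).trans_le zero_le⟩
  push Not at h0
  obtain ⟨k, hk⟩ := h0
  have hfin : {i | μ (A k) ≤ μ (A i)}.Finite :=
    Measure.finite_const_le_meas_of_disjoint_iUnion μ (pos_iff_ne_zero.2 hk) hA hd
      (measure_ne_top μ _)
  obtain ⟨i, hi, hmax⟩ := hfin.exists_maximalFor (fun i => μ (A i)) _ ⟨k, le_refl (μ (A k))⟩
  exact ⟨i, fun j => (le_total (μ (A j)) (μ (A i))).elim id
    fun hj => hmax (le_trans hi hj) hj⟩

theorem measure_preimage_le_liminf_of_isOpen {X Y : Type*} [MeasurableSpace Y]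
    [TopologicalSpace X] (μ : Measure Y) {f : ℕ → Y → X} {g : Y → X}
    (h : ∀ y, Tendsto (f · y) atTop (𝓝 (g y))) {V : Set X} (hV : IsOpen V) :
    μ (g ⁻¹' V) ≤ liminf (fun n => μ (f n ⁻¹' V)) atTop := by
  have hsub : g ⁻¹' V ⊆ ⋃ N, ⋂ n ≥ N, f n ⁻¹' V := fun y hy => by
    simpa [mem_iUnion] using eventually_atTop.1 ((h y).eventually_mem (hV.mem_nhds hy))
  have hmono : Monotone fun N => ⋂ n ≥ N, f n ⁻¹' V := fun M N hMN =>
    biInter_mono (fun n hn => le_trans hMN hn) fun _ _ => subset_rfl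
  calc μ (g ⁻¹' V) ≤ μ (⋃ N, ⋂ n ≥ N, f n ⁻¹' V) := measure_mono hsub
    _ = ⨆ N, μ (⋂ n ≥ N, f n ⁻¹' V) := hmono.measure_iUnion
    _ ≤ ⨆ N, ⨅ n ≥ N, μ (f n ⁻¹' V) :=
        iSup_mono fun N => le_iInf₂ fun n hn => measure_mono (biInter_subset_of_mem hn)
    _ = liminf (fun n => μ (f n ⁻¹' V)) atTop := liminf_eq_iSup_iInf_of_nat.symm

theorem tendsto_symm_of_tendsto_prod_nhds {ι X Y : Type*} [TopologicalSpace X] [CompactSpace X]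
    [TopologicalSpace Y] [T2Space Y] {l : Filter ι} {f : ι → X ≃ₜ Y} {g : X ≃ₜ Y}
    (h : ∀ x, Tendsto (fun q : ι × X => f q.1 q.2) (l ×ˢ 𝓝 x) (𝓝 (g x))) (y : Y) :
    Tendsto (fun i => (f i).symm y) l (𝓝 (g.symm y)) := by
  refine tendsto_iff_ultrafilter _ _ _ |>.2 fun U hU => ?_
  obtain ⟨x, hx⟩ : ∃ x, Tendsto (fun i => (f i).symm y) U (𝓝 x) :=
    ⟨_, (U.map fun i => (f i).symm y).le_nhds_lim⟩
  have hy : Tendsto (fun i => f i ((f i).symm y)) U (𝓝 (g x)) :=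
    (h x).comp (Tendsto.prodMk hU hx)
  simp only [Homeomorph.apply_symm_apply] at hy
  have hgx : y = g x := tendsto_nhds_unique tendsto_const_nhds hy
  rwa [g.symm_apply_eq.2 hgx]

theorem tendsto_prod_nhds_of_forall_strictMono {X Y : Type*} [TopologicalSpace X]
    [FirstCountableTopology X] [TopologicalSpace Y] {f : ℕ → X → Y} {x : X} {y : Y}
    (h : ∀ k : ℕ → ℕ, StrictMono k → ∀ u : ℕ → X, Tendsto u atTop (𝓝 x) →
      Tendsto (fun n => f (k n) (u n)) atTop (𝓝 y)) :
    Tendsto (fun q : ℕ × X => f q.1 q.2) (atTop ×ˢ 𝓝 x) (𝓝 y) := by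
  refine tendsto_of_seq_tendsto fun q hq => tendsto_of_subseq_tendsto fun k hk => ?_
  have hq' := hq.comp hk
  obtain ⟨j, hj, hkj⟩ := strictMono_subseq_of_tendsto_atTop (tendsto_fst.comp hq')
  exact ⟨j, h _ hkj _ ((tendsto_snd.comp hq').comp hj.tendsto_atTop)⟩

section RandomHomeomorph

variable {α X Y : Type*} [MeasurableSpace α] [TopologicalSpace X]
  [TopologicalSpace.SeparableSpace X] [TopologicalSpace.PseudoMetrizableSpace X]
  [PseudoEMetricSpace Y] [SecondCountableTopology Y] [MeasurableSpace Y] [OpensMeasurableSpace Y]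

theorem measurableSet_mem_image_of_isClosed {f : α → X ≃ₜ Y}
    (hf : ∀ x, Measurable fun a => f a x) {C : Set X} (hC : IsClosed C) :
    MeasurableSet {p : α × Y | p.2 ∈ f p.1 '' C} := by
  obtain ⟨D, hDC, hDcount, hCD⟩ :=
    (TopologicalSpace.IsSeparable.of_separableSpace C).exists_countable_dense_subset
  have himage (a : α) : f a '' C = closure (f a '' D) := by
    rw [← (f a).image_closure, hCD.antisymm (closure_minimal hDC hC)]
  simp only [himage, Metric.mem_closure_iff_infEDist_zero, Metric.infEDist, iInf_image]
  refine measurableSet_eq_fun (.biInf D hDcount fun x _ => ?_) measurable_const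
  exact measurable_snd.edist ((hf x).comp measurable_fst)

theorem measurable_measure_image_of_isOpen (μ : Measure Y) [SFinite μ] {f : α → X ≃ₜ Y}
    (hf : ∀ x, Measurable fun a => f a x) {V : Set X} (hV : IsOpen V) :
    Measurable fun a => μ (f a '' V) := by
  have h := measurable_measure_prodMk_left (ν := μ)
    (measurableSet_mem_image_of_isClosed hf hV.isClosed_compl).compl
  convert h using 3 with a
  rw [preimage_compl, ← compl_inj_iff, compl_compl, ← image_compl_eq (f a).bijective]
  rfl

end RandomHomeomorph

namespace RDS

variable {Ω : Type} [m : MeasurableSpace Ω] (S : RDS Ω)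

instance : IsProbabilityMeasure S.P := S.P_prob

theorem natCast_mem_T (n : ℕ) : (n : ℝ) ∈ S.T := by
  rcases S.T_cases with h | h <;> simp [h]

theorem add_mem_T {s t : ℝ} (hs : s ∈ S.T) (ht : t ∈ S.T) : s + t ∈ S.T := by
  rcases S.T_cases with h | h <;> rw [h] at hs ht ⊢
  · obtain ⟨⟨a, rfl⟩, b, rfl⟩ := hs, ht
    exact ⟨a + b, Nat.cast_add a b⟩
  · exact mem_Ici.2 (add_nonneg hs ht)

theorem sub_mem_T {s t : ℝ} (hs : s ∈ S.T) (ht : t ∈ S.T) (hst : s ≤ t) : t - s ∈ S.T := by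
  rcases S.T_cases with h | h <;> rw [h] at hs ht ⊢
  · obtain ⟨⟨a, rfl⟩, b, rfl⟩ := hs, ht
    exact ⟨b - a, Nat.cast_sub (Nat.cast_le.1 hst)⟩
  · exact mem_Ici.2 (sub_nonneg.2 hst)

theorem exists_countable_forall_antitone_tendsto : ∃ Q ⊆ S.T, Q.Countable ∧ ∀ t ∈ S.T,
    ∃ u : ℕ → ℝ, (∀ n, u n ∈ Q) ∧ Antitone u ∧ Tendsto u atTop (𝓝 t) := by
  rcases S.T_cases with h | h
  · exact ⟨S.T, subset_rfl, h ▸ countable_range _,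
      fun t ht => ⟨fun _ => t, fun _ => ht, antitone_const, tendsto_const_nhds⟩⟩
  · refine ⟨range ((↑) : ℚ → ℝ) ∩ S.T, inter_subset_right,
      (countable_range _).mono inter_subset_left, fun t ht => ?_⟩
    obtain ⟨u, hu, hmem, hlim⟩ :=
      Dense.exists_seq_strictAnti_tendsto (Rat.denseRange_cast (𝕜 := ℝ)) t
    rw [h] at ht ⊢
    exact ⟨u, fun n => ⟨(hmem n).2, (mem_Ici.1 ht).trans (hmem n).1.le⟩, hu.antitone, hlim⟩

theorem tFilter_le_atTop : S.tFilter ≤ atTop := inf_le_left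

theorem eventually_tFilter_mem_T : ∀ᶠ t in S.tFilter, t ∈ S.T :=
  mem_inf_of_right (mem_principal_self _)

instance : S.tFilter.NeBot :=
  (tendsto_inf.2 ⟨tendsto_natCast_atTop_atTop,
    tendsto_principal.2 (Eventually.of_forall S.natCast_mem_T)⟩ :
      Tendsto ((↑) : ℕ → ℝ) atTop S.tFilter).neBot

theorem map_add_tFilter {t : ℝ} (ht : t ∈ S.T) : map (t + ·) S.tFilter = S.tFilter := by
  refine map_eq_of_inverse (· - t) (funext fun s => add_sub_cancel t s) ?_ ?_
  · refine tendsto_inf.2 ⟨?_, tendsto_principal.2 ?_⟩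
    · exact tendsto_atTop_add_const_left _ t S.tFilter_le_atTop
    · exact S.eventually_tFilter_mem_T.mono fun s hs => S.add_mem_T ht hs
  · refine tendsto_inf.2 ⟨?_, tendsto_principal.2 ?_⟩
    · exact tendsto_atTop_add_const_right _ (-t) S.tFilter_le_atTop
    · filter_upwards [S.eventually_tFilter_mem_T, S.tFilter_le_atTop (eventually_ge_atTop t)]
        with s hs hts using S.sub_mem_T ht hs hts

variable {S} in
theorem CrackPoint.eq {ω : Ω} {x y : UnitAddCircle}
    (hx : S.CrackPoint ω x) (hy : S.CrackPoint ω y) : x = y := by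
  by_contra hxy
  obtain ⟨U, V, hU, hV, hxU, hyV, hUV⟩ := t2_separation hxy
  have hlim := (hx Uᶜ hU.isClosed_compl (by simpa using hxU)).add
    (hy Vᶜ hV.isClosed_compl (by simpa using hyV))
  have hcover (t : ℝ) : (1 : ℝ≥0∞) ≤ volume (S.φ t ω '' Uᶜ) + volume (S.φ t ω '' Vᶜ) :=
    calc (1 : ℝ≥0∞) = volume (S.φ t ω '' (Uᶜ ∪ Vᶜ)) := by
          simp [← compl_inter, hUV.inter_eq]
      _ ≤ volume (S.φ t ω '' Uᶜ) + volume (S.φ t ω '' Vᶜ) := by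
          rw [image_union]
          exact measure_union_le _ _
  simpa using ge_of_tendsto' hlim hcover

theorem tendsto_volume_image_shift {t : ℝ} (ht : t ∈ S.T) (ω : Ω) (G : Set UnitAddCircle) :
    Tendsto (fun s => volume (S.φ s (S.θ t ω) '' (S.φ t ω '' G))) S.tFilter (𝓝 0) ↔
      Tendsto (fun s => volume (S.φ s ω '' G)) S.tFilter (𝓝 0) := by
  conv_rhs => rw [← S.map_add_tFilter ht, tendsto_map'_iff]
  refine tendsto_congr' (S.eventually_tFilter_mem_T.mono fun s hs => ?_)
  simp only [Function.comp_apply, image_image, ← S.φ_cocycle t ht s hs ω]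

theorem crackPoint_shift_iff {t : ℝ} (ht : t ∈ S.T) (ω : Ω) (p : UnitAddCircle) :
    S.CrackPoint (S.θ t ω) (S.φ t ω p) ↔ S.CrackPoint ω p := by
  constructor
  · intro h G hG hp
    refine (S.tendsto_volume_image_shift ht ω G).1 (h _ ((S.φ t ω).isClosedMap _ hG) ?_)
    rwa [(S.φ t ω).injective.mem_set_image]
  · intro h G hG hp
    have := (S.tendsto_volume_image_shift ht ω _).2 (h _ (hG.preimage (S.φ t ω).continuous) hp)
    rwa [image_preimage_eq _ (S.φ t ω).surjective] at this

theorem setOf_mem_Ωc_and_eq {r : Ω → UnitAddCircle} (hr : ∀ ω ∈ S.Ωc, S.CrackPoint ω (r ω))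
    (x : UnitAddCircle) : {ω | ω ∈ S.Ωc ∧ r ω = x} = {ω | S.CrackPoint ω x} :=
  Set.ext fun ω => ⟨fun ⟨hω, hrx⟩ => hrx ▸ hr ω hω, fun h => ⟨⟨x, h⟩, (hr ω ⟨x, h⟩).eq h⟩⟩

theorem Fplus_le : S.Fplus ≤ m := iSup₂_le S.F_le

theorem F_le_Fplus {t : ℝ} (ht : t ∈ S.T) : S.F t ≤ S.Fplus :=
  le_iSup₂ (f := fun s (_ : s ∈ S.T) => S.F s) t ht

theorem measurable_φ_apply {t : ℝ} (ht : t ∈ S.T) (x : UnitAddCircle) :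
    Measurable[S.F t] fun ω => S.φ t ω x :=
  (S.φ_meas t ht).comp (@measurable_prodMk_right _ _ (S.F t) _ x)

theorem tendsto_φ_symm_of_antitone (ω : Ω) {t : ℝ} (ht : t ∈ S.T) {u : ℕ → ℝ}
    (huT : ∀ n, u n ∈ S.T) (hu : Antitone u) (hlim : Tendsto u atTop (𝓝 t)) (y : UnitAddCircle) :
    Tendsto (fun n => (S.φ (u n) ω).symm y) atTop (𝓝 ((S.φ t ω).symm y)) := by
  have hprod (x : UnitAddCircle) : Tendsto (fun q : ℕ × UnitAddCircle => S.φ (u q.1) ω q.2)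
      (atTop ×ˢ 𝓝 x) (𝓝 (S.φ t ω x)) :=
    tendsto_prod_nhds_of_forall_strictMono (f := fun n => S.φ (u n) ω) fun k hk v hv =>
      S.φ_cadlag_right ω t ht (u ∘ k) (fun _ => huT _) (hu.comp_monotone hk.monotone)
        (hlim.comp hk.tendsto_atTop) v x hv
  exact tendsto_symm_of_tendsto_prod_nhds (f := fun n => S.φ (u n) ω) hprod y

theorem volume_image_le_liminf_of_antitone (ω : Ω) {t : ℝ} (ht : t ∈ S.T) {u : ℕ → ℝ}
    (huT : ∀ n, u n ∈ S.T) (hu : Antitone u) (hlim : Tendsto u atTop (𝓝 t))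
    {V : Set UnitAddCircle} (hV : IsOpen V) :
    volume (S.φ t ω '' V) ≤ liminf (fun n => volume (S.φ (u n) ω '' V)) atTop := by
  simp only [Homeomorph.image_eq_preimage_symm]
  exact measure_preimage_le_liminf_of_isOpen volume
    (S.tendsto_φ_symm_of_antitone ω ht huT hu hlim) hV

theorem tendsto_volume_image_iff_of_approx {Q : Set ℝ} (hQT : Q ⊆ S.T)
    (hQ : ∀ t ∈ S.T, ∃ u : ℕ → ℝ, (∀ n, u n ∈ Q) ∧ Antitone u ∧ Tendsto u atTop (𝓝 t))
    (ω : Ω) {V : Set UnitAddCircle} (hV : IsOpen V) :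
    Tendsto (fun t => volume (S.φ t ω '' V)) S.tFilter (𝓝 0) ↔
      Tendsto (fun q : Q => volume (S.φ q ω '' V)) (comap Subtype.val atTop) (𝓝 0) := by
  constructor
  · exact fun h => h.comp (tendsto_inf.2
      ⟨tendsto_comap, tendsto_principal.2 (Eventually.of_forall fun q => hQT q.2)⟩)
  · simp only [ENNReal.tendsto_nhds_zero]
    intro h ε hε
    obtain ⟨a, ha⟩ : ∃ a, ∀ q ∈ Q, a ≤ q → volume (S.φ q ω '' V) ≤ ε := by
      obtain ⟨a, ha⟩ := eventually_atTop.1 (eventually_comap.1 (h ε hε))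
      exact ⟨a, fun q hq haq => ha q haq ⟨q, hq⟩ rfl⟩
    filter_upwards [S.eventually_tFilter_mem_T, S.tFilter_le_atTop (eventually_ge_atTop a)]
      with t ht hat
    obtain ⟨u, huQ, hu, hlim⟩ := hQ t ht
    have hbound (n : ℕ) : volume (S.φ (u n) ω '' V) ≤ ε :=
      ha _ (huQ n) (hat.trans (hu.le_of_tendsto hlim n))
    calc volume (S.φ t ω '' V)
        ≤ liminf (fun n => volume (S.φ (u n) ω '' V)) atTop :=
          S.volume_image_le_liminf_of_antitone ω ht (fun n => hQT (huQ n)) hu hlim hV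
      _ ≤ liminf (fun _ : ℕ => ε) atTop := liminf_le_liminf (Eventually.of_forall hbound)
      _ = ε := liminf_const ε

theorem measurableSet_tendsto_volume_image {V : Set UnitAddCircle} (hV : IsOpen V) :
    MeasurableSet[S.Fplus]
      {ω | Tendsto (fun t => volume (S.φ t ω '' V)) S.tFilter (𝓝 0)} := by
  obtain ⟨Q, hQT, hQcount, hQ⟩ := S.exists_countable_forall_antitone_tendsto
  have : Countable Q := hQcount
  simp only [S.tendsto_volume_image_iff_of_approx hQT hQ _ hV]
  refine measurableSet_tendsto _ fun q => ?_
  exact (@measurable_measure_image_of_isOpen Ω _ _ (S.F q) _ _ _ _ _ _ _ volume _ _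
    (S.measurable_φ_apply (hQT q.2)) _ hV).mono (S.F_le_Fplus (hQT q.2)) le_rfl

theorem crackPoint_iff_forall_countableBasis (ω : Ω) (y : UnitAddCircle) :
    S.CrackPoint ω y ↔ ∀ U ∈ TopologicalSpace.countableBasis UnitAddCircle, y ∈ U →
      Tendsto (fun t => volume (S.φ t ω '' (closure U)ᶜ)) S.tFilter (𝓝 0) := by
  have hb := TopologicalSpace.isBasis_countableBasis UnitAddCircle
  have hmono {G H : Set UnitAddCircle} (hGH : G ⊆ H)
      (hH : Tendsto (fun t => volume (S.φ t ω '' H)) S.tFilter (𝓝 0)) :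
      Tendsto (fun t => volume (S.φ t ω '' G)) S.tFilter (𝓝 0) :=
    tendsto_of_tendsto_of_tendsto_of_le_of_le tendsto_const_nhds hH (fun _ => zero_le)
      fun _ => measure_mono (image_mono hGH)
  constructor
  · intro h U hU hy
    exact hmono (compl_subset_compl.2 subset_closure)
      (h Uᶜ (hb.isOpen hU).isClosed_compl (by simpa using hy))
  · intro h G hG hy
    obtain ⟨U, hU, hyU, hUG⟩ := hb.exists_closure_subset (hG.isOpen_compl.mem_nhds hy)
    exact hmono (subset_compl_comm.1 hUG) (h U hU hyU)

theorem measurableSet_crackPoint_prod :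
    MeasurableSet[MeasurableSpace.prod inferInstance S.Fplus]
      {q : UnitAddCircle × Ω | S.CrackPoint q.2 q.1} := by
  simp only [S.crackPoint_iff_forall_countableBasis, ofPred_forall]
  refine .biInter (TopologicalSpace.countable_countableBasis _) fun U hU => ?_
  have hU' : MeasurableSet U :=
    ((TopologicalSpace.isBasis_countableBasis UnitAddCircle).isOpen hU).measurableSet
  exact .imp (@measurable_fst _ _ _ S.Fplus _ hU') (@measurable_snd _ _ _ S.Fplus _
    (S.measurableSet_tendsto_volume_image isClosed_closure.isOpen_compl))

theorem measurableSet_Fplus_crackPoint (p : UnitAddCircle) :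
    MeasurableSet[S.Fplus] {ω | S.CrackPoint ω p} :=
  @measurable_prodMk_left _ _ _ S.Fplus p _ S.measurableSet_crackPoint_prod

theorem measurableSet_crackPoint (p : UnitAddCircle) :
    MeasurableSet {ω | S.CrackPoint ω p} :=
  S.Fplus_le _ (S.measurableSet_Fplus_crackPoint p)

theorem measurable_θ_Fplus {t : ℝ} (ht : t ∈ S.T) : Measurable[m, S.Fplus] (S.θ t) :=
  (S.θ_preserving t ht).measurable.mono le_rfl S.Fplus_le

theorem indep_F_comap_θ {t : ℝ} (ht : t ∈ S.T) :
    ProbabilityTheory.Indep (S.F t) (S.Fplus.comap (S.θ t)) S.P := by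
  rw [ProbabilityTheory.Indep_iff]
  rintro E _ hE ⟨A, hA, rfl⟩
  rw [S.θ_indep t ht E A hE hA,
    (S.θ_preserving t ht).measure_preimage (S.Fplus_le A hA).nullMeasurableSet]

theorem measure_inter_crackPoint {t : ℝ} (ht : t ∈ S.T) (p : UnitAddCircle) {B : Set Ω}
    (hB : MeasurableSet[S.F t] B) :
    S.P (B ∩ {ω | S.CrackPoint ω p}) =
      ∫⁻ ω in B, S.P {ω' | S.CrackPoint ω' (S.φ t ω p)} ∂S.P := by
  have h := measure_inter_mk_mem_eq_setLIntegral_of_indep (mγ := S.Fplus) (S.F_le t ht)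
    (S.measurable_φ_apply ht p) (S.measurable_θ_Fplus ht) (S.indep_F_comap_θ ht) hB
    S.measurableSet_crackPoint_prod
  simp only [mem_ofPred_eq, S.crackPoint_shift_iff ht] at h
  refine h.trans (lintegral_congr fun ω => ?_)
  rw [Measure.map_apply (S.measurable_θ_Fplus ht) (S.measurableSet_Fplus_crackPoint _)]
  exact (S.θ_preserving t ht).measure_preimage
    (S.measurableSet_crackPoint _).nullMeasurableSet

theorem ae_measure_crackPoint_eq_of_forall_le {p : UnitAddCircle}
    (hmax : ∀ y, S.P {ω | S.CrackPoint ω y} ≤ S.P {ω | S.CrackPoint ω p}) {t : ℝ} (ht : t ∈ S.T) :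
    ∀ᵐ ω ∂S.P, S.P {ω' | S.CrackPoint ω' (S.φ t ω p)} = S.P {ω' | S.CrackPoint ω' p} := by
  have hmean := S.measure_inter_crackPoint ht p MeasurableSet.univ
  rw [univ_inter, Measure.restrict_univ] at hmean
  refine ae_eq_of_ae_le_of_lintegral_le (Eventually.of_forall fun ω => hmax _)
    (hmean ▸ measure_ne_top _ _) aemeasurable_const ?_
  rw [← hmean, lintegral_const, measure_univ, mul_one]

theorem measure_crackPoint_eq_zero_or_one_of_forall_le {p : UnitAddCircle}
    (hmax : ∀ y, S.P {ω | S.CrackPoint ω y} ≤ S.P {ω | S.CrackPoint ω p}) :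
    S.P {ω | S.CrackPoint ω p} = 0 ∨ S.P {ω | S.CrackPoint ω p} = 1 := by
  have hF_dir : Directed (· ≤ ·) fun t : S.T => S.F t :=
    Monotone.directed_le fun s t hst => S.F_mono s s.2 t t.2 hst
  have hE : MeasurableSet[⨆ t : S.T, S.F t] {ω | S.CrackPoint ω p} := by
    rw [iSup_subtype]
    exact S.measurableSet_Fplus_crackPoint p
  refine measure_eq_zero_or_one_of_indep_directed (fun t : S.T => S.F_le t t.2) hF_dir hE
    fun t B hB => ?_
  rw [S.measure_inter_crackPoint t.2 p hB,
    lintegral_congr_ae (ae_restrict_of_ae (S.ae_measure_crackPoint_eq_of_forall_le hmax t.2)),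
    setLIntegral_const, mul_comm]

theorem detFixedPoint_of_forall_ae_φ_eq {p : UnitAddCircle}
    (h : ∀ t ∈ S.T, ∀ᵐ ω ∂S.P, S.φ t ω p = p) : S.DetFixedPoint p := by
  obtain ⟨Q, hQT, hQcount, hQ⟩ := S.exists_countable_forall_antitone_tendsto
  have hQfix : ∀ᵐ ω ∂S.P, ∀ q ∈ Q, S.φ q ω p = p :=
    (ae_ball_iff hQcount).2 fun q hq => h q (hQT hq)
  filter_upwards [hQfix] with ω hω t ht
  obtain ⟨u, huQ, hu, hlim⟩ := hQ t ht
  have hright := S.φ_cadlag_right ω t ht u (fun n => hQT (huQ n)) hu hlim (fun _ => p) p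
    tendsto_const_nhds
  simp only [fun n => hω (u n) (huQ n)] at hright
  exact tendsto_nhds_unique hright tendsto_const_nhds

theorem detFixedPoint_of_measure_crackPoint_eq_one {p : UnitAddCircle}
    (h : S.P {ω | S.CrackPoint ω p} = 1) : S.DetFixedPoint p := by
  have hp : ∀ᵐ ω ∂S.P, S.CrackPoint ω p :=
    (mem_ae_iff_prob_eq_one (S.measurableSet_crackPoint p)).2 h
  refine S.detFixedPoint_of_forall_ae_φ_eq fun t ht => ?_
  filter_upwards [hp, (S.θ_preserving t ht).quasiMeasurePreserving.ae hp] with ω hω hθω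
  exact ((S.crackPoint_shift_iff ht ω p).2 hω).eq hθω

end RDS

theorem crackPoint_law_atomless_or_deterministic_general
    {Ω : Type} [MeasurableSpace Ω] (S : RDS Ω) :
    (∀ x : UnitAddCircle, S.P {ω | S.CrackPoint ω x} = 0) ∨
    (∃ p : UnitAddCircle, S.DetFixedPoint p ∧ S.P {ω | S.CrackPoint ω p} = 1) := by
  have hdisj : Pairwise (Function.onFun Disjoint fun x => {ω | S.CrackPoint ω x}) :=
    fun x y hxy => disjoint_left.2 fun ω hx hy => hxy (hx.eq hy)
  obtain ⟨p, hmax⟩ :=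
    exists_forall_measure_le_of_pairwise_disjoint S.P S.measurableSet_crackPoint hdisj
  rcases S.measure_crackPoint_eq_zero_or_one_of_forall_le hmax with h0 | h1
  · exact Or.inl fun x => nonpos_iff_eq_zero.1 (h0 ▸ hmax x)
  · exact Or.inr ⟨p, S.detFixedPoint_of_measure_crackPoint_eq_one h1, h1⟩

/-- if `ℙ(Ω_c) = 1` then either the law of the crack point is atomless, or the
crack point is almost surely a deterministic fixed point. -/
theorem crackPoint_law_atomless_or_deterministic
    {Ω : Type} [MeasurableSpace Ω] (S : RDS Ω) (hP : S.P S.Ωc = 1)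
    (r : Ω → UnitAddCircle) (hr : ∀ ω ∈ S.Ωc, S.CrackPoint ω (r ω)) :
    (∀ x : UnitAddCircle, S.P {ω | ω ∈ S.Ωc ∧ r ω = x} = 0) ∨
    (∃ p : UnitAddCircle, S.DetFixedPoint p ∧ S.P {ω | ω ∈ S.Ωc ∧ r ω = p} = 1) := by
  simpa only [S.setOf_mem_Ωc_and_eq hr] using crackPoint_law_atomless_or_deterministic_general S
end
end

section
/- Let ρ be a probability measure on 𝕊¹ that is ergodic with respect to either the transition family (φ̄ₓᵗ) given by φ̄ₓᵗ(A)=ℙ(ω : φ(t,ω)⁻¹(x)∈A), or the transition family (φₓᵗ) given by φₓᵗ(A)=ℙ(ω : φ(t,ω)x∈A), for an invertible RDS φ on 𝕊¹. Then either ρ is atomless, or ρ = (1/|P|)·Σ_{x∈P} δₓ for some finite forward-invariant set P⊆𝕊¹. -/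
open MeasureTheory Filter Topology Set ENNReal

noncomputable section

/-!
Stationarity applied to a singleton `{y}` says, after Fubini, that `ρ {y}` is the average over `ω`
of the masses of the points that the random bijection carries to `y`. If `y` has maximal mass, none
of these masses exceeds their average, so almost surely they all equal it. Thus the finite set of
points of maximal mass is almost surely mapped into itself by the inverse bijection, hence, being
finite, by the bijection as well. By ergodicity this set carries all the mass, which is spread
evenly over it. The backward and the forward family are the two cases of a random bijection and its
inverse. Right-continuity in time makes the exceptional null set independent of `t`.
-/

theorem image_eq_of_finite_of_mapsTo {α : Type*} {s : Set α} (hs : s.Finite) {f : α → α}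
    (hinj : InjOn f s) (hf : MapsTo f s s) : f '' s = s :=
  ((hs.injOn_iff_bijOn_of_mapsTo hf).1 hinj).image_eq

theorem mapsTo_symm_of_finite {α : Type*} {s : Set α} (hs : s.Finite) {e : α ≃ α}
    (he : MapsTo e s s) : MapsTo e.symm s s :=
  mapsTo_iff_image_subset.2 <| (e.symm_image_subset s s).2
    (image_eq_of_finite_of_mapsTo hs e.injective.injOn he).superset

section MaxAtoms

variable {α : Type*} [MeasurableSpace α] {μ : Measure α}

/-- The points of maximal mass of `μ`. When `μ` has no atoms this is the whole space. -/
def maxAtoms (μ : Measure α) : Set α := {x | ∀ y, μ {y} ≤ μ {x}}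

theorem measure_singleton_eq_of_mem_maxAtoms {x y : α} (hx : x ∈ maxAtoms μ)
    (hy : y ∈ maxAtoms μ) : μ {x} = μ {y} :=
  le_antisymm (hy x) (hx y)

theorem mem_maxAtoms_of_measure_singleton_eq {x y : α} (hy : y ∈ maxAtoms μ)
    (hxy : μ {x} = μ {y}) : x ∈ maxAtoms μ :=
  fun z => (hy z).trans_eq hxy.symm

theorem finite_setOf_le_measure_singleton [MeasurableSingletonClass α] [IsFiniteMeasure μ]
    {a : ℝ≥0∞} (ha : a ≠ 0) : {x | a ≤ μ {x}}.Finite :=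
  Measure.finite_const_le_meas_of_disjoint_iUnion μ (pos_iff_ne_zero.2 ha)
    measurableSet_singleton (fun _ _ hxy => disjoint_singleton.2 hxy) (measure_ne_top _ _)

theorem finite_maxAtoms [MeasurableSingletonClass α] [IsFiniteMeasure μ] {x : α}
    (hx : μ {x} ≠ 0) : (maxAtoms μ).Finite :=
  (finite_setOf_le_measure_singleton hx).subset fun _ hy => hy x

theorem nonempty_maxAtoms [MeasurableSingletonClass α] [IsFiniteMeasure μ] [Nonempty α] :
    (maxAtoms μ).Nonempty := by
  by_cases hμ : ∀ x, μ {x} = 0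
  · inhabit α
    exact ⟨default, fun y => by rw [hμ y, hμ default]⟩
  push Not at hμ
  obtain ⟨x, hx⟩ := hμ
  obtain ⟨p, hxp, hp⟩ := exists_max_image {y | μ {x} ≤ μ {y}} (fun y => μ {y})
    (finite_setOf_le_measure_singleton hx) ⟨x, le_refl (μ {x})⟩
  refine ⟨p, fun y => ?_⟩
  rcases le_total (μ {x}) (μ {y}) with hxy | hyx
  · exact hp y hxy
  · exact hyx.trans hxp

theorem eq_inv_card_smul_sum_dirac [MeasurableSingletonClass α] [IsProbabilityMeasure μ]
    {s : Finset α} {c : ℝ≥0∞} (hc : ∀ x ∈ s, μ {x} = c) (hs : μ s = 1) :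
    μ = (s.card : ℝ≥0∞)⁻¹ • ∑ x ∈ s, Measure.dirac x := by
  have hcard : c = (s.card : ℝ≥0∞)⁻¹ := by
    refine ENNReal.eq_inv_of_mul_eq_one_left ?_
    rw [← hs, ← sum_measure_singleton, Finset.sum_congr rfl hc, Finset.sum_const, nsmul_eq_mul,
      mul_comm]
  have hae : ∀ᵐ x ∂μ, x ∈ s := (prob_compl_eq_zero_iff s.measurableSet).2 hs
  calc μ = ∑ x ∈ s, μ {x} • Measure.dirac x := Measure.ae_mem_finset_iff.1 hae
    _ = ∑ x ∈ s, c • Measure.dirac x := Finset.sum_congr rfl fun x hx => by rw [hc x hx]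
    _ = (s.card : ℝ≥0∞)⁻¹ • ∑ x ∈ s, Measure.dirac x := by rw [← Finset.smul_sum, hcard]

theorem ae_mem_maxAtoms_of_measure_singleton_eq_lintegral {Ω : Type*} [MeasurableSpace Ω]
    {P : Measure Ω} [IsProbabilityMeasure P] [IsFiniteMeasure μ] {g : Ω → α} {y : α}
    (hy : y ∈ maxAtoms μ) (havg : μ {y} = ∫⁻ ω, μ {g ω} ∂P) : ∀ᵐ ω ∂P, g ω ∈ maxAtoms μ := by
  have heq : (fun ω => μ {g ω}) =ᵐ[P] fun _ => μ {y} := by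
    refine ae_eq_of_ae_le_of_lintegral_le (ae_of_all _ fun ω => hy (g ω)) ?_
      aemeasurable_const ?_
    · exact havg ▸ measure_ne_top μ {y}
    · rw [lintegral_const, measure_univ, mul_one, havg]
  filter_upwards [heq] with ω hω using mem_maxAtoms_of_measure_singleton_eq hy hω

end MaxAtoms

section RandomBijection

/-- The transition probabilities `x ↦ (A ↦ P (f · x ∈ A))` of a random self-map `f`, as a bare
set function: no measurability in `x` is built in. -/
def transitionProb {Ω α : Type*} [MeasurableSpace Ω] (P : Measure Ω) (f : Ω → α → α) (x : α)
    (A : Set α) : ℝ≥0∞ :=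
  P {ω | f ω x ∈ A}

theorem transitionProb_eq_one_of_ae_mapsTo {Ω α : Type*} [MeasurableSpace Ω] {P : Measure Ω}
    [IsProbabilityMeasure P] {f : Ω → α → α} {A : Set α} (hf : ∀ᵐ ω ∂P, MapsTo (f ω) A A) {x : α}
    (hx : x ∈ A) : transitionProb P f x A = 1 := by
  rw [← measure_univ (μ := P)]
  refine measure_congr (eventuallyEq_univ.2 ?_)
  filter_upwards [hf] with ω hω using hω hx

variable {Ω α ι : Type*} [MeasurableSpace Ω] [MeasurableSpace α] {P : Measure Ω}
  {μ : Measure α}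

/-- Ergodicity of `μ` for a transition family `ν` with time set `T`: `μ` is stationary, and every
almost surely absorbing set is trivial. It is `RDS.ErgodicFor` for an arbitrary state space and
time set. -/
def IsErgodicFor (T : Set ι) (ν : ι → α → Set α → ℝ≥0∞) (μ : Measure α) : Prop :=
  (∀ t ∈ T, ∀ A, MeasurableSet A → μ A = ∫⁻ x, ν t x A ∂μ) ∧
    ∀ A, MeasurableSet A → (∀ t ∈ T, ∀ᵐ x ∂μ, x ∈ A → ν t x A = 1) → μ A = 0 ∨ μ A = 1

theorem lintegral_transitionProb_singleton [SFinite P] [SFinite μ] {f : Ω → α ≃ α} {y : α}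
    (hf : MeasurableSet {q : Ω × α | f q.1 q.2 = y}) :
    ∫⁻ x, transitionProb P (fun ω => f ω) x {y} ∂μ = ∫⁻ ω, μ {(f ω).symm y} ∂P := by
  have hsection (ω : Ω) : Prod.mk ω ⁻¹' {q : Ω × α | f q.1 q.2 = y} = {(f ω).symm y} := by
    ext x
    exact (f ω).eq_symm_apply.symm
  simp only [← hsection]
  rw [← Measure.prod_apply hf, Measure.prod_apply_symm hf]
  rfl

theorem ae_mapsTo_maxAtoms [IsProbabilityMeasure P] [IsFiniteMeasure μ]
    (hfin : (maxAtoms μ).Finite) {f : Ω → α ≃ α}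
    (hf : ∀ y, MeasurableSet {q : Ω × α | f q.1 q.2 = y})
    (hstat : ∀ y, μ {y} = ∫⁻ x, transitionProb P (fun ω => f ω) x {y} ∂μ) :
    ∀ᵐ ω ∂P, MapsTo (f ω) (maxAtoms μ) (maxAtoms μ) := by
  have hsymm : ∀ᵐ ω ∂P, ∀ y ∈ maxAtoms μ, (f ω).symm y ∈ maxAtoms μ :=
    (ae_ball_iff hfin.countable).2 fun y hy =>
      ae_mem_maxAtoms_of_measure_singleton_eq_lintegral hy
        ((hstat y).trans (lintegral_transitionProb_singleton (hf y)))
  filter_upwards [hsymm] with ω hω using mapsTo_symm_of_finite hfin (e := (f ω).symm) hω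

theorem atomless_or_uniform_of_isErgodicFor [MeasurableSingletonClass α]
    [IsProbabilityMeasure P] [IsProbabilityMeasure μ] {T : Set ι} {f : ι → Ω → α ≃ α}
    (hf : ∀ t ∈ T, ∀ y, MeasurableSet {q : Ω × α | f t q.1 q.2 = y})
    (h : IsErgodicFor T (fun t => transitionProb P fun ω => f t ω) μ) :
    (∀ x, μ {x} = 0) ∨ ∃ s : Finset α, s.Nonempty ∧
      (∀ t ∈ T, ∀ᵐ ω ∂P, MapsTo (f t ω) s s) ∧
      μ = (s.card : ℝ≥0∞)⁻¹ • ∑ x ∈ s, Measure.dirac x := by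
  refine or_iff_not_imp_left.2 fun hμ => ?_
  push Not at hμ
  obtain ⟨a, ha⟩ := hμ
  have : Nonempty α := ⟨a⟩
  obtain ⟨p, hp⟩ := nonempty_maxAtoms (μ := μ)
  have hfin : (maxAtoms μ).Finite := finite_maxAtoms ha
  obtain ⟨s, hs⟩ := hfin.exists_finset_coe
  have hinv : ∀ t ∈ T, ∀ᵐ ω ∂P, MapsTo (f t ω) s s := fun t ht => by
    rw [hs]
    exact ae_mapsTo_maxAtoms hfin (hf t ht) fun y => h.1 t ht {y} (measurableSet_singleton y)
  have hps : p ∈ s := Finset.mem_coe.1 (hs ▸ hp)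
  have hpos : μ s ≠ 0 := fun h0 => ha <| le_zero_iff.1 <|
    (hp a).trans_eq (measure_mono_null (singleton_subset_iff.2 hps) h0)
  have hone : μ s = 1 := (h.2 s s.measurableSet fun t ht => ae_of_all _ fun _ hx =>
    transitionProb_eq_one_of_ae_mapsTo (hinv t ht) hx).resolve_left hpos
  have hconst : ∀ x ∈ s, μ {x} = μ {p} := fun x hx =>
    measure_singleton_eq_of_mem_maxAtoms (hs ▸ hx) hp
  exact ⟨s, ⟨p, hps⟩, hinv, eq_inv_card_smul_sum_dirac hconst hone⟩

theorem measurableSet_setOf_symm_apply_eq [MeasurableEq α] {f : Ω → α ≃ α}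
    (hf : Measurable fun q : Ω × α => f q.1 q.2) (y : α) :
    MeasurableSet {q : Ω × α | (f q.1).symm q.2 = y} := by
  simp only [Equiv.symm_apply_eq]
  exact measurableSet_eq_fun measurable_snd
    (hf.comp (measurable_fst.prodMk measurable_const))

end RandomBijection

section RightContinuity

variable {ι : Type*} [LinearOrder ι] [TopologicalSpace ι]

theorem continuousWithinAt_inter_Ici_of_antitone_seq [OrderClosedTopology ι]
    [FirstCountableTopology ι] {α : Type*} [TopologicalSpace α] {f : ι → α} {T : Set ι} {t : ι}
    (hf : ∀ u : ℕ → ι, (∀ n, u n ∈ T) → Antitone u → Tendsto u atTop (𝓝 t) →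
      Tendsto (fun n => f (u n)) atTop (𝓝 (f t))) :
    ContinuousWithinAt f (T ∩ Ici t) t := by
  refine tendsto_of_subseq_tendsto fun u hu => ?_
  obtain ⟨N, hN⟩ := eventually_atTop.1 (eventually_mem_of_tendsto_nhdsWithin hu)
  have hmem (n : ℕ) : u (n + N) ∈ T ∩ Ici t := hN _ (Nat.le_add_left N n)
  obtain ⟨g, hg⟩ := exists_increasing_or_nonincreasing_subseq (· ≥ ·) fun n => u (n + N)
  have hlim : Tendsto (fun n => u (g n + N)) atTop (𝓝 t) :=
    ((tendsto_add_atTop_iff_nat N).2 (tendsto_nhds_of_tendsto_nhdsWithin hu)).comp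
      g.strictMono.tendsto_atTop
  rcases hg with hanti | hnot_ge
  · exact ⟨fun n => g n + N, hf _ (fun n => (hmem _).1)
      (antitone_iff_forall_lt.2 fun m n hmn => hanti m n hmn) hlim⟩
  · have hmono : StrictMono fun n => u (g n + N) := fun m n hmn => not_le.1 (hnot_ge m n hmn)
    have hlt : u (g 0 + N) < t := (hmono one_pos).trans_le (hmono.monotone.ge_of_tendsto hlim 1)
    exact absurd (hmem (g 0)).2 hlt.not_ge

variable [OrderTopology ι] [SecondCountableTopology ι]

theorem exists_countable_subset_forall_mem_closure_inter_Ici (T : Set ι) :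
    ∃ D ⊆ T, D.Countable ∧ ∀ t ∈ T, t ∈ closure (D ∩ Ici t) := by
  -- A countable dense subset works except at the points isolated on the right, which are countable.
  obtain ⟨D, hDT, hD, hTD⟩ : ∃ D ⊆ T, D.Countable ∧ T ⊆ closure D := by
    obtain ⟨D, hD, hdense⟩ := TopologicalSpace.exists_countable_dense T
    exact ⟨(↑) '' D, Subtype.coe_image_subset T D, hD.image _, Subtype.dense_iff.1 hdense⟩
  let I : Set ι := {t ∈ T | 𝓝[T ∩ Ioi t] t = ⊥}
  have hI : I.Countable := countable_setOfPred_isolated_right_within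
  refine ⟨D ∪ I, union_subset hDT (sep_subset _ _), hD.union hI, fun t ht => ?_⟩
  by_cases htI : t ∈ I
  · exact subset_closure ⟨Or.inr htI, self_mem_Ici⟩
  have hlim : (𝓝[T ∩ Ioi t] t).NeBot := ⟨fun h => htI ⟨ht, h⟩⟩
  refine mem_closure_iff.2 fun U hU htU => ?_
  have hne : (U ∩ (T ∩ Ioi t)).Nonempty :=
    mem_closure_iff.1 (mem_closure_iff_nhdsWithin_neBot.2 hlim) U hU htU
  obtain ⟨u, huU, huT, htu⟩ := hne
  obtain ⟨d, ⟨hdU, htd⟩, hdD⟩ := mem_closure_iff.1 (hTD huT) (U ∩ Ioi t)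
    (hU.inter isOpen_Ioi) ⟨huU, htu⟩
  exact ⟨d, hdU, Or.inl hdD, htd.le⟩

theorem ae_forall_mem_of_isClosed {Ω α : Type*} [MeasurableSpace Ω] {P : Measure Ω}
    [TopologicalSpace α] {T : Set ι} {X : ι → Ω → α} {C : Set α} (hC : IsClosed C)
    (hX : ∀ᵐ ω ∂P, ∀ t ∈ T, ContinuousWithinAt (fun s => X s ω) (T ∩ Ici t) t)
    (hmem : ∀ t ∈ T, ∀ᵐ ω ∂P, X t ω ∈ C) : ∀ᵐ ω ∂P, ∀ t ∈ T, X t ω ∈ C := by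
  obtain ⟨D, hDT, hD, hclosure⟩ := exists_countable_subset_forall_mem_closure_inter_Ici T
  have hmemD : ∀ᵐ ω ∂P, ∀ d ∈ D, X d ω ∈ C := (ae_ball_iff hD).2 fun d hd => hmem d (hDT hd)
  filter_upwards [hX, hmemD] with ω hXω hω t ht
  have hcont : ContinuousWithinAt (fun s => X s ω) (D ∩ Ici t) t :=
    (hXω t ht).mono (inter_subset_inter_left _ hDT)
  exact hC.closure_subset (hcont.mem_closure (hclosure t ht) fun d hd => hω d hd.1)

theorem ae_forall_image_eq_of_finite {Ω α : Type*} [MeasurableSpace Ω] {P : Measure Ω}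
    [TopologicalSpace α] [T1Space α] {T : Set ι} {φ : ι → Ω → α ≃ α} {s : Set α} (hs : s.Finite)
    (hright : ∀ᵐ ω ∂P, ∀ x, ∀ t ∈ T, ContinuousWithinAt (fun r => φ r ω x) (T ∩ Ici t) t)
    (hinv : ∀ t ∈ T, ∀ᵐ ω ∂P, MapsTo (φ t ω) s s) :
    ∀ᵐ ω ∂P, ∀ t ∈ T, φ t ω '' s = s := by
  have hmem : ∀ᵐ ω ∂P, ∀ x ∈ s, ∀ t ∈ T, φ t ω x ∈ s :=
    (ae_ball_iff hs.countable).2 fun x hx =>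
      ae_forall_mem_of_isClosed hs.isClosed (hright.mono fun _ hω => hω x)
        fun t ht => (hinv t ht).mono fun _ hω => hω hx
  filter_upwards [hmem] with ω hω t ht
  exact image_eq_of_finite_of_mapsTo hs (φ t ω).injective.injOn fun x hx => hω x hx t ht

end RightContinuity

theorem ergodic_atomless_or_uniform_on_finite_invariant_general
    {Ω α ι : Type*} [MeasurableSpace Ω] [TopologicalSpace α] [T1Space α] [MeasurableSpace α]
    [MeasurableEq α] [LinearOrder ι] [TopologicalSpace ι] [OrderTopology ι]
    [SecondCountableTopology ι] {T : Set ι} {P : Measure Ω} [IsProbabilityMeasure P]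
    {φ : ι → Ω → α ≃ α} (hmeas : ∀ t ∈ T, Measurable fun q : Ω × α => φ t q.1 q.2)
    (hright : ∀ᵐ ω ∂P, ∀ x, ∀ t ∈ T, ContinuousWithinAt (fun s => φ s ω x) (T ∩ Ici t) t)
    {ρ : Measure α} [IsProbabilityMeasure ρ]
    (h : IsErgodicFor T (fun t => transitionProb P fun ω => (φ t ω).symm) ρ ∨
      IsErgodicFor T (fun t => transitionProb P fun ω => φ t ω) ρ) :
    (∀ x, ρ {x} = 0) ∨ ∃ s : Finset α, s.Nonempty ∧ (∀ᵐ ω ∂P, ∀ t ∈ T, φ t ω '' s = s) ∧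
      ρ = (s.card : ℝ≥0∞)⁻¹ • ∑ x ∈ s, Measure.dirac x := by
  have hcases : (∀ x, ρ {x} = 0) ∨ ∃ s : Finset α, s.Nonempty ∧
      (∀ t ∈ T, ∀ᵐ ω ∂P, MapsTo (φ t ω) s s) ∧
      ρ = (s.card : ℝ≥0∞)⁻¹ • ∑ x ∈ s, Measure.dirac x := by
    rcases h with hbackward | hforward
    · refine (atomless_or_uniform_of_isErgodicFor
        (fun t ht => measurableSet_setOf_symm_apply_eq (hmeas t ht)) hbackward).imp_right ?_
      rintro ⟨s, hs, hinv, hunif⟩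
      exact ⟨s, hs, fun t ht => (hinv t ht).mono fun _ hω =>
        mapsTo_symm_of_finite s.finite_toSet hω, hunif⟩
    · exact atomless_or_uniform_of_isErgodicFor
        (fun t ht y => hmeas t ht (measurableSet_singleton y)) hforward
  refine hcases.imp_right ?_
  rintro ⟨s, hs, hinv, hunif⟩
  exact ⟨s, hs, ae_forall_image_eq_of_finite s.finite_toSet hright hinv, hunif⟩

namespace RDS

variable {Ω : Type} [MeasurableSpace Ω] (S : RDS Ω)

theorem measurable_φ {t : ℝ} (ht : t ∈ S.T) :
    Measurable fun q : Ω × UnitAddCircle => S.φ t q.1 q.2 :=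
  (S.φ_meas t ht).mono (sup_le_sup_right (MeasurableSpace.comap_mono (S.F_le t ht)) _) le_rfl

theorem continuousWithinAt_φ (ω : Ω) (x : UnitAddCircle) {t : ℝ} (ht : t ∈ S.T) :
    ContinuousWithinAt (fun s => S.φ s ω x) (S.T ∩ Ici t) t :=
  continuousWithinAt_inter_Ici_of_antitone_seq fun u huT hu hlim =>
    S.φ_cadlag_right ω t ht u huT hu hlim (fun _ => x) x tendsto_const_nhds

end RDS

/-- a probability measure ergodic for the reverse or forward transition family
is either atomless or the uniform measure on a finite forward-invariant set. -/
theorem ergodic_atomless_or_uniform_on_finite_invariant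
    {Ω : Type} [MeasurableSpace Ω] (S : RDS Ω) (ρ : Measure UnitAddCircle)
    [IsProbabilityMeasure ρ]
    (h : S.ErgodicFor S.revTrans ρ ∨ S.ErgodicFor S.fwdTrans ρ) :
    Atomless ρ ∨ ∃ P : Finset UnitAddCircle, P.Nonempty ∧
      S.ForwardInvariant ↑P ∧
      ρ = (P.card : ℝ≥0∞)⁻¹ • ∑ x ∈ P, Measure.dirac x := by
  have := S.P_prob
  exact (ergodic_atomless_or_uniform_on_finite_invariant_general
    (φ := fun t ω => (S.φ t ω).toEquiv) (fun _ ht => S.measurable_φ ht)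
    (ae_of_all _ fun ω x _ ht => S.continuousWithinAt_φ ω x ht) h).imp_right
      fun ⟨s, hs, hinv, hunif⟩ =>
        ⟨s, hs, hinv.mono fun _ hω t ht => (hω t ht).subset, hunif⟩
end
end
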